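/- If there exists a finite sequence of growth-rule applications taking a pair (S,J) to the pair of empty strings, then J is a dominant state string for S. -/

import Mathlib

/-!
Compare two lattice paths from the origin by asking that they have the same endpoint and that every
vertex of the first lie coordinatewise above some vertex of the second. This relation is transitive
and, by translation, is preserved when a common path is put before or after both, so it can be
checked on the letters that a growth rule rewrites. There the only new vertex is the one between the
two letters: it is nonnegative when the first state is `1`, and when the first state is `0` it lies
above the vertex following the letter `(-s, -1)` that replaces the first one. A path lying above a
dominant path is dominant, and the empty path is dominant.
-/

noncomputable section

/-- The ground field `K = ℚ(v)`. -/
abbrev K : Type := RatFunc ℚ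

/-- The indeterminate `v`. -/
def v : K := RatFunc.X

/-- The three states `-1, 0, 1`. -/
inductive St where
  | neg : St
  | zero : St
  | pos : St
deriving DecidableEq

instance : Fintype St where
  elems := {St.neg, St.zero, St.pos}
  complete := fun x => by cases x <;> simp

/-- The integer value of a state. -/
def stval : St → ℤ
  | .neg => -1
  | .zero => 0
  | .pos => 1

/-- The order `-1 < 0 < 1` on states. -/
def stLt (a b : St) : Prop := stval a < stval b

/-- The weight `μ(s, j) ∈ ℤ²`; `true` is the sign `+`, `false` is `-`. -/
def wt : Bool → St → ℤ × ℤ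
  | true, .pos => (1, 0)
  | true, .zero => (-1, 1)
  | true, .neg => (0, -1)
  | false, .pos => (0, 1)
  | false, .zero => (1, -1)
  | false, .neg => (-1, 0)

/-- Total weight `Σ μ(s_k, j_k)` of a sign string and a state string. -/
def wtSum (S : List Bool) (J : List St) : ℤ × ℤ :=
  ((S.zip J).map fun p => wt p.1 p.2).sum

/-- A state string is dominant if its lattice path stays in the dominant
Weyl chamber and returns to the origin. -/
def Dominant (S : List Bool) (J : List St) : Prop :=
  J.length = S.length ∧
  (∀ k : ℕ, 0 ≤ (wtSum (S.take k) (J.take k)).1 ∧ 0 ≤ (wtSum (S.take k) (J.take k)).2) ∧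
  wtSum S J = 0

/-- Coefficients of `b^{+-}(1) ∈ V⁺ ⊗ V⁻`. -/
def bCpm : St → St → K
  | .pos, .neg => 1
  | .zero, .zero => v⁻¹
  | .neg, .pos => v⁻¹ ^ 2
  | _, _ => 0

/-- Coefficients of `b^{-+}(1) ∈ V⁻ ⊗ V⁺`. -/
def bCmp : St → St → K
  | .pos, .neg => 1
  | .zero, .zero => v⁻¹
  | .neg, .pos => v⁻¹ ^ 2
  | _, _ => 0

/-- Matrix entries of `σ_{+-} : V⁺ ⊗ V⁻ → K`. -/
def sCpm : St → St → K
  | .neg, .pos => 1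
  | .zero, .zero => v
  | .pos, .neg => v ^ 2
  | _, _ => 0

/-- Matrix entries of `σ_{-+} : V⁻ ⊗ V⁺ → K`. -/
def sCmp : St → St → K
  | .neg, .pos => 1
  | .zero, .zero => v
  | .pos, .neg => v ^ 2
  | _, _ => 0

/-- `tYpp a b c` is the coefficient of `e_a ⊗ e_b` in `t^{++}_-(e_c)`. -/
def tYpp : St → St → St → K
  | .pos, .zero, .pos => 1
  | .zero, .pos, .pos => v⁻¹
  | .pos, .neg, .zero => 1
  | .neg, .pos, .zero => v⁻¹
  | .zero, .neg, .neg => 1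
  | .neg, .zero, .neg => v⁻¹
  | _, _, _ => 0

/-- `tYmm a b c` is the coefficient of `e_a ⊗ e_b` in `t^{--}_+(e_c)`. -/
def tYmm : St → St → St → K
  | .pos, .zero, .pos => 1
  | .zero, .pos, .pos => v⁻¹
  | .pos, .neg, .zero => 1
  | .neg, .pos, .zero => v⁻¹
  | .zero, .neg, .neg => 1
  | .neg, .zero, .neg => v⁻¹
  | _, _, _ => 0

/-- `tLpp a b c` is the coefficient of `e_c` in `t^-_{++}(e_a ⊗ e_b)`. -/
def tLpp : St → St → St → K
  | .pos, .zero, .pos => v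
  | .zero, .pos, .pos => 1
  | .pos, .neg, .zero => v
  | .neg, .pos, .zero => 1
  | .zero, .neg, .neg => v
  | .neg, .zero, .neg => 1
  | _, _, _ => 0

/-- `tLmm a b c` is the coefficient of `e_c` in `t^+_{--}(e_a ⊗ e_b)`. -/
def tLmm : St → St → St → K
  | .pos, .zero, .pos => v
  | .zero, .pos, .pos => 1
  | .pos, .neg, .zero => v
  | .neg, .pos, .zero => 1
  | .zero, .neg, .neg => v
  | .neg, .zero, .neg => 1
  | _, _, _ => 0

/-- Matrix entries of the H-map
`(id_{V⁺} ⊗ t^-_{++}) ∘ (t^{++}_- ⊗ id_{V⁺}) : V⁻ ⊗ V⁺ → V⁺ ⊗ V⁻`: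
`HCpm a b c d` is the coefficient of `e_a ⊗ e_b` in the image of `e_c ⊗ e_d`. -/
def HCpm (a b c d : St) : K := ∑ y : St, tYpp a y c * tLpp y d b

/-- Matrix entries of the H-map
`(t^-_{++} ⊗ id_{V⁺}) ∘ (id_{V⁺} ⊗ t^{++}_-) : V⁺ ⊗ V⁻ → V⁻ ⊗ V⁺`:
`HCmp a b c d` is the coefficient of `e_a ⊗ e_b` in the image of `e_c ⊗ e_d`. -/
def HCmp (a b c d : St) : K := ∑ x : St, tLpp c x a * tYpp x b d

/-- State patterns of the three H-rules: `(j_k, j_{k+1})` on top, the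
replacement below. -/
inductive HPat : St → St → St → St → Prop where
  | h1 : HPat .pos .zero .zero .pos
  | h2 : HPat .zero .zero .neg .pos
  | h3 : HPat .zero .neg .neg .zero

/-- State patterns of the three Y-rules. -/
inductive YPat : St → St → St → Prop where
  | y1 : YPat .pos .zero .pos
  | y2 : YPat .pos .neg .zero
  | y3 : YPat .zero .neg .neg

/-- One application of a growth rule, rewriting `(S, J)` to `(S', J')`. -/
inductive Step : List Bool → List St → List Bool → List St → Prop where
  | hstep (A B : List Bool) (P Q : List St) (s1 s2 : Bool) (j1 j2 j1' j2' : St)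
      (hl : A.length = P.length) (hs : s1 ≠ s2) (hp : HPat j1 j2 j1' j2') :
      Step (A ++ s1 :: s2 :: B) (P ++ j1 :: j2 :: Q)
        (A ++ (!s1) :: (!s2) :: B) (P ++ j1' :: j2' :: Q)
  | ustep (A B : List Bool) (P Q : List St) (s1 s2 : Bool)
      (hl : A.length = P.length) (hs : s1 ≠ s2) :
      Step (A ++ s1 :: s2 :: B) (P ++ St.pos :: St.neg :: Q) (A ++ B) (P ++ Q)
  | ystep (A B : List Bool) (P Q : List St) (s : Bool) (j1 j2 j' : St)
      (hl : A.length = P.length) (hp : YPat j1 j2 j') :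
      Step (A ++ s :: s :: B) (P ++ j1 :: j2 :: Q) (A ++ (!s) :: B) (P ++ j' :: Q)

/-- A complete execution of the growth algorithm from `(S, J)` down to the
pair of empty strings. -/
inductive Exec : List Bool → List St → Type where
  | nil : Exec [] []
  | hstep (A B : List Bool) (P Q : List St) (s1 s2 : Bool) (j1 j2 j1' j2' : St)
      (hl : A.length = P.length) (hs : s1 ≠ s2) (hp : HPat j1 j2 j1' j2')
      (e : Exec (A ++ (!s1) :: (!s2) :: B) (P ++ j1' :: j2' :: Q)) :
      Exec (A ++ s1 :: s2 :: B) (P ++ j1 :: j2 :: Q)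
  | ustep (A B : List Bool) (P Q : List St) (s1 s2 : Bool)
      (hl : A.length = P.length) (hs : s1 ≠ s2)
      (e : Exec (A ++ B) (P ++ Q)) :
      Exec (A ++ s1 :: s2 :: B) (P ++ St.pos :: St.neg :: Q)
  | ystep (A B : List Bool) (P Q : List St) (s : Bool) (j1 j2 j' : St)
      (hl : A.length = P.length) (hp : YPat j1 j2 j')
      (e : Exec (A ++ (!s) :: B) (P ++ j' :: Q)) :
      Exec (A ++ s :: s :: B) (P ++ j1 :: j2 :: Q)

/-- The web tensor of an execution, as coordinates with respect to the basis
`e^S_J` of `V^S`: `web e L` is the coefficient of `e^S_L`. -/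
def web : {S : List Bool} → {J : List St} → Exec S J → List St → K
  | _, _, .nil, L => if L = [] then 1 else 0
  | _, _, .hstep A _ _ _ s1 _ _ _ _ _ _ _ _ e, L =>
      match L.drop A.length with
      | a :: b :: R =>
          ∑ c : St, ∑ d : St,
            (if s1 then HCpm a b c d else HCmp a b c d) *
              web e (L.take A.length ++ c :: d :: R)
      | _ => 0
  | _, _, .ustep A _ _ _ s1 _ _ _ e, L =>
      match L.drop A.length with
      | a :: b :: R => (if s1 then bCpm a b else bCmp a b) * web e (L.take A.length ++ R)
      | _ => 0
  | _, _, .ystep A _ _ _ s _ _ _ _ _ e, L =>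
      match L.drop A.length with
      | a :: b :: R =>
          ∑ c : St, (if s then tYpp a b c else tYmm a b c) * web e (L.take A.length ++ c :: R)
      | _ => 0

/-- `c ∈ v⁻¹ ℤ[v⁻¹]`: a polynomial in `v⁻¹` with zero constant term. -/
def ZeroConst (c : K) : Prop :=
  ∃ p : Polynomial ℤ, p.coeff 0 = 0 ∧ c = Polynomial.aeval v⁻¹ p

/-- `x` has the negative-exponent property relative to a state string `J`
(`n` is the length of the ambient sign string). -/
def NegExpProp (n : ℕ) (x : List St → K) (J : List St) : Prop :=
  x J = 1 ∧ ∀ J' : List St, J'.length = n → J' ≠ J → ZeroConst (x J')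

/-- `c ∈ ℕ[v, v⁻¹]`: a Laurent polynomial with nonnegative integer
coefficients. -/
def IsNatLaurent (c : K) : Prop :=
  ∃ (p : Polynomial ℕ) (m : ℕ), c = v⁻¹ ^ m * Polynomial.aeval v p

/-- `c ∈ ℤ[v⁻¹]`. -/
def InZInv (c : K) : Prop := ∃ p : Polynomial ℤ, c = Polynomial.aeval v⁻¹ p

/-- Property P: all coefficients lie in `ℤ[v⁻¹]` and at most one of them has a
nonzero constant term. -/
def PropP (n : ℕ) (x : List St → K) : Prop :=
  (∀ J : List St, J.length = n → InZInv (x J)) ∧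
  ∀ J1 J2 : List St, J1.length = n → J2.length = n →
    ¬ ZeroConst (x J1) → ¬ ZeroConst (x J2) → J1 = J2

/-- The sign string `(+,+,−,−,+,+,−,−,+,+,−,−)`. -/
def base : List Bool :=
  [true, true, false, false, true, true, false, false, true, true, false, false]

/-- Comparison of two paths from the origin, each given by its list of steps: they have the same
endpoint, and every vertex of `V` is at least some vertex of `W`. The vertices of a path are the
sums of the prefixes of its list of steps. Growth rules replace a path by one below it. -/
structure PathAbove {M : Type*} [AddMonoid M] [LE M] (V W : List M) : Prop where
  sum_eq : V.sum = W.sum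
  exists_prefix_sum_le : ∀ P, P <+: V → ∃ Q, Q <+: W ∧ Q.sum ≤ P.sum

namespace PathAbove

variable {M : Type*} [AddMonoid M] [Preorder M] {U V W : List M}

lemma trans (hUV : PathAbove U V) (hVW : PathAbove V W) : PathAbove U W where
  sum_eq := hUV.sum_eq.trans hVW.sum_eq
  exists_prefix_sum_le P hP := by
    obtain ⟨Q, hQ, hQP⟩ := hUV.exists_prefix_sum_le P hP
    obtain ⟨R, hR, hRQ⟩ := hVW.exists_prefix_sum_le Q hQ
    exact ⟨R, hR, hRQ.trans hQP⟩

lemma append_left [AddLeftMono M] (h : PathAbove V W) (U : List M) :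
    PathAbove (U ++ V) (U ++ W) where
  sum_eq := by rw [List.sum_append, List.sum_append, h.sum_eq]
  exists_prefix_sum_le P hP := by
    obtain hPU | ⟨P, rfl⟩ := List.prefix_or_prefix_of_prefix hP (List.prefix_append U V)
    · exact ⟨P, List.prefix_append_of_prefix hPU, le_rfl⟩
    · obtain ⟨Q, hQ, hQP⟩ :=
        h.exists_prefix_sum_le P ((List.prefix_append_right_inj U).mp hP)
      refine ⟨U ++ Q, (List.prefix_append_right_inj U).mpr hQ, ?_⟩
      rw [List.sum_append, List.sum_append]
      gcongr

lemma append_right (h : PathAbove V W) (U : List M) : PathAbove (V ++ U) (W ++ U) where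
  sum_eq := by rw [List.sum_append, List.sum_append, h.sum_eq]
  exists_prefix_sum_le P hP := by
    obtain hPV | ⟨P, rfl⟩ := List.prefix_or_prefix_of_prefix hP (List.prefix_append V U)
    · obtain ⟨Q, hQ, hQP⟩ := h.exists_prefix_sum_le P hPV
      exact ⟨Q, List.prefix_append_of_prefix hQ, hQP⟩
    · have hPU : P <+: U := (List.prefix_append_right_inj V).mp hP
      refine ⟨W ++ P, (List.prefix_append_right_inj W).mpr hPU, le_of_eq ?_⟩
      rw [List.sum_append, List.sum_append, h.sum_eq]

lemma pair {a b : M} (hsum : a + b = W.sum) (ha : ∃ Q, Q <+: W ∧ Q.sum ≤ a) :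
    PathAbove [a, b] W where
  sum_eq := by rw [List.sum_pair, hsum]
  exists_prefix_sum_le P hP := by
    obtain rfl | ⟨R, rfl, hR⟩ := List.prefix_cons_iff.mp hP
    · exact ⟨[], List.nil_prefix, le_rfl⟩
    obtain rfl | ⟨T, rfl, hT⟩ := List.prefix_cons_iff.mp hR
    · simpa only [List.sum_singleton] using ha
    · obtain rfl := List.prefix_nil.mp hT
      exact ⟨W, List.prefix_rfl, by rw [List.sum_pair, hsum]⟩

lemma pair_of_nonneg {a b : M} (hsum : a + b = W.sum) (ha : 0 ≤ a) : PathAbove [a, b] W :=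
  pair hsum ⟨[], List.nil_prefix, ha⟩

lemma pair_cons_of_le {a b c : M} (hsum : a + b = (c :: W).sum) (hca : c ≤ a) :
    PathAbove [a, b] (c :: W) :=
  pair hsum ⟨[c], ⟨W, rfl⟩, by rwa [List.sum_singleton]⟩

end PathAbove

lemma wt_pos_nonneg (s : Bool) : 0 ≤ wt s .pos := by
  cases s <;> decide

lemma wt_not_neg_le_wt_zero (s : Bool) : wt (!s) .neg ≤ wt s .zero := by
  cases s <;> decide

lemma wt_pos_add_wt_not_neg (s : Bool) : wt s .pos + wt (!s) .neg = 0 := by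
  cases s <;> rfl

lemma HPat.wt_add_wt {i j i' j' : St} (h : HPat i j i' j') (s : Bool) :
    wt s i + wt (!s) j = wt (!s) i' + wt s j' := by
  cases h <;> cases s <;> rfl

lemma YPat.wt_add_wt {i j k : St} (h : YPat i j k) (s : Bool) :
    wt s i + wt s j = wt (!s) k := by
  cases h <;> cases s <;> rfl

/-- The steps of the lattice path of a sign string and a state string. -/
def pathSteps (S : List Bool) (J : List St) : List (ℤ × ℤ) :=
  List.zipWith wt S J

lemma HPat.pathAbove {i j i' j' : St} (h : HPat i j i' j') (s : Bool) :
    PathAbove (pathSteps [s, !s] [i, j]) (pathSteps [!s, s] [i', j']) := by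
  have hsum := (h.wt_add_wt s).trans List.sum_pair.symm
  cases h with
  | h1 => exact .pair_of_nonneg hsum (wt_pos_nonneg s)
  | h2 | h3 => exact .pair_cons_of_le hsum (wt_not_neg_le_wt_zero s)

lemma YPat.pathAbove {i j k : St} (h : YPat i j k) (s : Bool) :
    PathAbove (pathSteps [s, s] [i, j]) (pathSteps [!s] [k]) := by
  have hsum := (h.wt_add_wt s).trans List.sum_singleton.symm
  cases h with
  | y1 | y2 => exact .pair_of_nonneg hsum (wt_pos_nonneg s)
  | y3 => exact .pair_cons_of_le hsum (wt_not_neg_le_wt_zero s)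

lemma pathAbove_pathSteps_pos_neg_nil (s : Bool) :
    PathAbove (pathSteps [s, !s] [.pos, .neg]) (pathSteps [] []) :=
  .pair_of_nonneg (wt_pos_add_wt_not_neg s) (wt_pos_nonneg s)

lemma wtSum_eq_sum_pathSteps (S : List Bool) (J : List St) :
    wtSum S J = (pathSteps S J).sum :=
  congrArg List.sum List.map_zip_eq_zipWith

lemma pathSteps_take (S : List Bool) (J : List St) (k : ℕ) :
    pathSteps (S.take k) (J.take k) = (pathSteps S J).take k :=
  List.take_zipWith.symm

lemma pathSteps_append {A : List Bool} {P : List St} (h : A.length = P.length)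
    (S : List Bool) (J : List St) :
    pathSteps (A ++ S) (P ++ J) = pathSteps A P ++ pathSteps S J :=
  List.zipWith_append h

lemma PathAbove.pathSteps_append_append {A S T : List Bool} {P J L : List St}
    (h : PathAbove (pathSteps S J) (pathSteps T L)) (hA : A.length = P.length)
    (hS : S.length = J.length) (hT : T.length = L.length) (B : List Bool) (Q : List St) :
    PathAbove (pathSteps (A ++ (S ++ B)) (P ++ (J ++ Q)))
      (pathSteps (A ++ (T ++ B)) (P ++ (L ++ Q))) := by
  rw [pathSteps_append hA, pathSteps_append hA, pathSteps_append hS, pathSteps_append hT]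
  exact (h.append_right _).append_left _

lemma dominant_iff_pathAbove_nil {S : List Bool} {J : List St} :
    Dominant S J ↔ J.length = S.length ∧ PathAbove (pathSteps S J) [] := by
  simp only [Dominant, wtSum_eq_sum_pathSteps, pathSteps_take]
  refine and_congr_right fun _ => ⟨fun ⟨hnonneg, hsum⟩ => ⟨hsum, fun P hP => ?_⟩, fun h => ?_⟩
  · rw [List.prefix_iff_eq_take.mp hP]
    exact ⟨[], List.prefix_rfl, hnonneg P.length⟩
  · refine ⟨fun k => ?_, h.sum_eq⟩
    obtain ⟨Q, hQ, hQk⟩ := h.exists_prefix_sum_le _ (List.take_prefix k _)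
    obtain rfl := List.prefix_nil.mp hQ
    exact hQk

lemma dominant_nil : Dominant [] [] :=
  ⟨rfl, fun k => by simp [wtSum], rfl⟩

namespace Step

variable {S T : List Bool} {J L : List St}

lemma pathAbove (h : Step S J T L) : PathAbove (pathSteps S J) (pathSteps T L) := by
  cases h with
  | hstep A B P Q s s' i j i' j' hl hs hp =>
    obtain rfl := Bool.eq_not_of_ne hs.symm
    rw [Bool.not_not]
    exact (hp.pathAbove s).pathSteps_append_append hl rfl rfl B Q
  | ustep A B P Q s s' hl hs =>
    obtain rfl := Bool.eq_not_of_ne hs.symm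
    exact (pathAbove_pathSteps_pos_neg_nil s).pathSteps_append_append hl rfl rfl B Q
  | ystep A B P Q s i j k hl hp =>
    exact (hp.pathAbove s).pathSteps_append_append hl rfl rfl B Q

lemma length_eq_of_length_eq (h : Step S J T L) (hL : L.length = T.length) :
    J.length = S.length := by
  cases h <;> simp only [List.length_append, List.length_cons] at hL ⊢ <;> omega

lemma dominant (h : Step S J T L) (hL : Dominant T L) : Dominant S J := by
  rw [dominant_iff_pathAbove_nil] at hL ⊢
  exact ⟨h.length_eq_of_length_eq hL.1, h.pathAbove.trans hL.2⟩

end Step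

theorem dominant_of_reaches_nil_general {p q : List Bool × List St}
    (h : Relation.ReflTransGen (fun p q => Step p.1 p.2 q.1 q.2) p q)
    (hq : Dominant q.1 q.2) : Dominant p.1 p.2 := by
  induction h using Relation.ReflTransGen.head_induction_on with
  | refl => exact hq
  | head hstep _ ih => exact hstep.dominant ih

/-- if the growth algorithm can reduce `(S, J)` to the empty
pair, then `J` is dominant for `S`. -/
theorem dominant_of_reaches_nil (S : List Bool) (J : List St)
    (h : Relation.ReflTransGen
      (fun p q : List Bool × List St => Step p.1 p.2 q.1 q.2) (S, J) ([], [])) :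
    Dominant S J :=
  dominant_of_reaches_nil_general h dominant_nil

end
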